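/- Let B = A + Aᵀ − α Aᵀ A, where A = X (X − γY)ᵀ. Then for every step size α ∈ (0, (1−γ)/(1+γ)²] and every integer p ≥ 1, E[B^p] ≼ (13/12) · 4^p · Σ in the Loewner order. -/

import Mathlib

open MeasureTheory ProbabilityTheory Matrix
noncomputable section

/-- Euclidean norm of a vector in `ℝ^d`. -/
def euclNorm {d : ℕ} (u : Fin d → ℝ) : ℝ := Real.sqrt (∑ i, u i ^ 2)

/-- Entrywise expectation of a random matrix. -/
def matExp {d : ℕ} {Ω : Type*} [MeasurableSpace Ω] (P : Measure Ω)
    (M : Ω → Matrix (Fin d) (Fin d) ℝ) : Matrix (Fin d) (Fin d) ℝ :=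
  Matrix.of fun i j => ∫ ω, M ω i j ∂P


theorem euclNorm_eq_norm {d : ℕ} (u : Fin d → ℝ) : euclNorm u = ‖WithLp.toLp 2 u‖ := by
  simp [euclNorm, EuclideanSpace.norm_eq]

theorem euclNorm_nonneg {d : ℕ} (u : Fin d → ℝ) : 0 ≤ euclNorm u := Real.sqrt_nonneg _

theorem euclNorm_add_le {d : ℕ} (u v : Fin d → ℝ) :
    euclNorm (u + v) ≤ euclNorm u + euclNorm v := by
  simpa only [euclNorm_eq_norm, WithLp.toLp_add] using norm_add_le _ _

theorem euclNorm_smul {d : ℕ} (c : ℝ) (u : Fin d → ℝ) :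
    euclNorm (c • u) = |c| * euclNorm u := by
  simp only [euclNorm_eq_norm, WithLp.toLp_smul, norm_smul, Real.norm_eq_abs]

theorem dotProduct_self_eq_euclNorm_sq {d : ℕ} (u : Fin d → ℝ) : u ⬝ᵥ u = euclNorm u ^ 2 := by
  rw [euclNorm, Real.sq_sqrt (Finset.sum_nonneg fun i _ => sq_nonneg _)]
  simp [dotProduct, sq]

theorem abs_dotProduct_le_euclNorm_mul {d : ℕ} (u v : Fin d → ℝ) :
    |u ⬝ᵥ v| ≤ euclNorm u * euclNorm v := by
  have h := abs_real_inner_le_norm (WithLp.toLp 2 v) (WithLp.toLp 2 u)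
  rw [EuclideanSpace.inner_eq_star_dotProduct] at h
  simpa [euclNorm_eq_norm, mul_comm] using h

theorem euclNorm_pow_mulVec_le {d : ℕ} {M : Matrix (Fin d) (Fin d) ℝ} {c : ℝ} (hc : 0 ≤ c)
    (hM : ∀ v, euclNorm (M *ᵥ v) ≤ c * euclNorm v) (m : ℕ) (v : Fin d → ℝ) :
    euclNorm (M ^ m *ᵥ v) ≤ c ^ m * euclNorm v := by
  induction m with
  | zero => simp
  | succ m ih =>
    rw [pow_succ', ← mulVec_mulVec, pow_succ', mul_assoc]
    exact (hM _).trans (mul_le_mul_of_nonneg_left ih hc)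

theorem dotProduct_pow_mulVec_le {d : ℕ} {M : Matrix (Fin d) (Fin d) ℝ} {c : ℝ} (hc : 0 ≤ c)
    (hsymm : Mᵀ = M) (hM : ∀ v, euclNorm (M *ᵥ v) ≤ c * euclNorm v) (m : ℕ) (v : Fin d → ℝ) :
    v ⬝ᵥ (M ^ (m + 2) *ᵥ v) ≤ c ^ m * euclNorm (M *ᵥ v) ^ 2 := by
  have h : v ⬝ᵥ (M ^ (m + 2) *ᵥ v) = (M *ᵥ v) ⬝ᵥ (M ^ m *ᵥ (M *ᵥ v)) := by
    rw [show m + 2 = m + 1 + 1 by rfl, pow_succ, pow_succ', ← mulVec_mulVec, ← mulVec_mulVec,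
      dotProduct_mulVec, ← mulVec_transpose, hsymm]
  rw [h]
  calc _ ≤ euclNorm (M *ᵥ v) * euclNorm (M ^ m *ᵥ (M *ᵥ v)) :=
        (le_abs_self _).trans (abs_dotProduct_le_euclNorm_mul _ _)
    _ ≤ euclNorm (M *ᵥ v) * (c ^ m * euclNorm (M *ᵥ v)) :=
        mul_le_mul_of_nonneg_left (euclNorm_pow_mulVec_le hc hM m _) (euclNorm_nonneg _)
    _ = _ := by ring

/-- The matrix `A + Aᵀ - α Aᵀ A` for `A = x (x - γ y)ᵀ`. -/
def tdMatrix {d : ℕ} (γ α : ℝ) (x y : Fin d → ℝ) : Matrix (Fin d) (Fin d) ℝ :=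
  vecMulVec x (x - γ • y) + (vecMulVec x (x - γ • y))ᵀ
    - α • ((vecMulVec x (x - γ • y))ᵀ * vecMulVec x (x - γ • y))

theorem tdMatrix_transpose {d : ℕ} (γ α : ℝ) (x y : Fin d → ℝ) :
    (tdMatrix γ α x y)ᵀ = tdMatrix γ α x y := by
  simp [tdMatrix, add_comm]

theorem tdMatrix_mulVec {d : ℕ} (γ α : ℝ) (x y v : Fin d → ℝ) :
    tdMatrix γ α x y *ᵥ v = (x ⬝ᵥ v - γ * (y ⬝ᵥ v)) • x
      + (x ⬝ᵥ v - α * ((x ⬝ᵥ x) * (x ⬝ᵥ v - γ * (y ⬝ᵥ v)))) • (x - γ • y) := by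
  simp only [tdMatrix, sub_mulVec, add_mulVec, smul_mulVec, ← mulVec_mulVec, transpose_vecMulVec,
    vecMulVec_mulVec, op_smul_eq_smul, dotProduct_smul, sub_dotProduct, smul_dotProduct, smul_eq_mul]
  ext i
  simp
  ring

theorem euclNorm_tdMatrix_mulVec_le {d : ℕ} {γ α : ℝ} (hγ : γ ∈ Set.Ico (0 : ℝ) 1)
    (hα : α ∈ Set.Ioc 0 ((1 - γ) / (1 + γ) ^ 2)) {x y : Fin d → ℝ}
    (hx : euclNorm x ≤ 1) (hy : euclNorm y ≤ 1) (v : Fin d → ℝ) :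
    euclNorm (tdMatrix γ α x y *ᵥ v) ≤ 3 * |x ⬝ᵥ v| + |y ⬝ᵥ v| := by
  obtain ⟨hγ0, hγ1⟩ := hγ
  obtain ⟨hα0, hα1⟩ := hα
  rw [le_div_iff₀ (by positivity)] at hα1
  have hz : euclNorm (x - γ • y) ≤ 1 + γ := by
    have h := euclNorm_add_le x ((-γ) • y)
    rw [euclNorm_smul, abs_neg, abs_of_nonneg hγ0, neg_smul, ← sub_eq_add_neg] at h
    nlinarith
  rw [tdMatrix_mulVec, dotProduct_self_eq_euclNorm_sq]
  have hn0 : 0 ≤ α * euclNorm x ^ 2 := by positivity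
  have hn1 : α * euclNorm x ^ 2 * (1 + γ) ^ 2 ≤ 1 - γ := by
    have : euclNorm x ^ 2 ≤ 1 := pow_le_one₀ (euclNorm_nonneg x) hx
    have : α * euclNorm x ^ 2 ≤ α := by nlinarith
    nlinarith [sq_nonneg (1 + γ)]
  rw [← mul_assoc α]
  set s := α * euclNorm x ^ 2
  set a := x ⬝ᵥ v
  set b := y ⬝ᵥ v
  have hs1 : s ≤ 1 := by nlinarith [mul_nonneg hn0 hγ0, mul_nonneg hn0 (sq_nonneg γ)]
  have hab : |a - γ * b| ≤ |a| + γ * |b| := by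
    simpa [abs_mul, abs_of_nonneg hγ0] using abs_sub a (γ * b)
  have hw : |a - s * (a - γ * b)| ≤ (1 - s) * |a| + s * γ * |b| := by
    have h := abs_add_le ((1 - s) * a) (s * γ * b)
    rw [abs_mul, abs_mul, abs_of_nonneg (sub_nonneg.2 hs1), abs_of_nonneg (mul_nonneg hn0 hγ0)] at h
    rwa [show (1 - s) * a + s * γ * b = a - s * (a - γ * b) by ring] at h
  have hsγ : γ + (1 + γ) * (s * γ) ≤ 1 := by
    have h : s * (1 + γ) * (1 + γ) ≤ 1 - γ := by nlinarith
    nlinarith [mul_nonneg hn0 hγ0, mul_nonneg (sub_nonneg.2 hγ1.le) (sub_nonneg.2 hγ1.le)]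
  have hc : 1 + (1 + γ) * (1 - s) ≤ 3 := by nlinarith
  calc _ ≤ |a - γ * b| * euclNorm x + |a - s * (a - γ * b)| * euclNorm (x - γ • y) := by
        rw [← euclNorm_smul, ← euclNorm_smul]
        exact euclNorm_add_le _ _
    _ ≤ (|a| + γ * |b|) * 1 + ((1 - s) * |a| + s * γ * |b|) * (1 + γ) := by
        have := euclNorm_nonneg x
        have := euclNorm_nonneg (x - γ • y)
        have := abs_nonneg (a - s * (a - γ * b))
        gcongr
    _ = (1 + (1 + γ) * (1 - s)) * |a| + (γ + (1 + γ) * (s * γ)) * |b| := by ring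
    _ ≤ 3 * |a| + 1 * |b| := by gcongr
    _ = _ := by ring

theorem euclNorm_tdMatrix_mulVec_le_four_mul {d : ℕ} {γ α : ℝ} (hγ : γ ∈ Set.Ico (0 : ℝ) 1)
    (hα : α ∈ Set.Ioc 0 ((1 - γ) / (1 + γ) ^ 2)) {x y : Fin d → ℝ}
    (hx : euclNorm x ≤ 1) (hy : euclNorm y ≤ 1) (v : Fin d → ℝ) :
    euclNorm (tdMatrix γ α x y *ᵥ v) ≤ 4 * euclNorm v := by
  have h := euclNorm_tdMatrix_mulVec_le hγ hα hx hy v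
  have hxv := abs_dotProduct_le_euclNorm_mul x v
  have hyv := abs_dotProduct_le_euclNorm_mul y v
  have hv := euclNorm_nonneg v
  nlinarith

theorem dotProduct_tdMatrix_pow_mulVec_le {d : ℕ} {γ α : ℝ} (hγ : γ ∈ Set.Ico (0 : ℝ) 1)
    (hα : α ∈ Set.Ioc 0 ((1 - γ) / (1 + γ) ^ 2)) {x y : Fin d → ℝ}
    (hx : euclNorm x ≤ 1) (hy : euclNorm y ≤ 1) (m : ℕ) (v : Fin d → ℝ) :
    v ⬝ᵥ (tdMatrix γ α x y ^ (m + 1) *ᵥ v) ≤ 4 ^ m * (3 * (x ⬝ᵥ v) ^ 2 + (y ⬝ᵥ v) ^ 2) := by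
  cases m with
  | zero =>
    simp only [zero_add, pow_one, pow_zero, one_mul, tdMatrix_mulVec, dotProduct_comm v,
      add_dotProduct, smul_dotProduct, sub_dotProduct, smul_eq_mul]
    rw [dotProduct_self_eq_euclNorm_sq]
    have h : 0 ≤ α * euclNorm x ^ 2 * (x ⬝ᵥ v - γ * (y ⬝ᵥ v)) ^ 2 := by
      have := hα.1
      positivity
    obtain ⟨hγ0, hγ1⟩ := hγ
    nlinarith [mul_nonneg hγ0 (sq_nonneg (x ⬝ᵥ v + y ⬝ᵥ v)),
      mul_nonneg (sub_nonneg.2 hγ1.le) (add_nonneg (sq_nonneg (x ⬝ᵥ v)) (sq_nonneg (y ⬝ᵥ v)))]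
  | succ m =>
    have h := euclNorm_tdMatrix_mulVec_le hγ hα hx hy v
    have hsq : euclNorm (tdMatrix γ α x y *ᵥ v) ^ 2
        ≤ 4 * (3 * (x ⬝ᵥ v) ^ 2 + (y ⬝ᵥ v) ^ 2) := by
      have := pow_le_pow_left₀ (euclNorm_nonneg _) h 2
      nlinarith [sq_nonneg (|x ⬝ᵥ v| - |y ⬝ᵥ v|), sq_abs (x ⬝ᵥ v), sq_abs (y ⬝ᵥ v)]
    calc _ ≤ 4 ^ m * euclNorm (tdMatrix γ α x y *ᵥ v) ^ 2 :=
          dotProduct_pow_mulVec_le (by norm_num) (tdMatrix_transpose γ α x y)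
            (euclNorm_tdMatrix_mulVec_le_four_mul hγ hα hx hy) m v
      _ ≤ 4 ^ m * (4 * (3 * (x ⬝ᵥ v) ^ 2 + (y ⬝ᵥ v) ^ 2)) := by gcongr
      _ = _ := by ring

theorem abs_apply_le_of_euclNorm_mulVec_le {d : ℕ} {M : Matrix (Fin d) (Fin d) ℝ} {c : ℝ}
    (hM : ∀ v, euclNorm (M *ᵥ v) ≤ c * euclNorm v) (i j : Fin d) : |M i j| ≤ c := by
  have hone (k : Fin d) : euclNorm (Pi.single k 1) = 1 := by
    simp [euclNorm_eq_norm]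
  have h := abs_dotProduct_le_euclNorm_mul (Pi.single i 1) (M *ᵥ Pi.single j 1)
  have hj := hM (Pi.single j 1)
  simp only [hone, one_mul, mul_one] at h hj
  simpa using h.trans hj

theorem dotProduct_matExp_mulVec {d : ℕ} {Ω : Type*} [MeasurableSpace Ω] {P : Measure Ω}
    {M : Ω → Matrix (Fin d) (Fin d) ℝ} (hM : ∀ i j, Integrable (fun ω => M ω i j) P)
    (v : Fin d → ℝ) :
    v ⬝ᵥ (matExp P M *ᵥ v) = ∫ ω, v ⬝ᵥ (M ω *ᵥ v) ∂P := by
  simp only [dotProduct, mulVec, matExp, of_apply]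
  rw [integral_finsetSum _ fun i _ =>
    (integrable_finsetSum _ fun j _ => (hM i j).mul_const _).const_mul _]
  refine Finset.sum_congr rfl fun i _ => ?_
  rw [integral_const_mul, integral_finsetSum _ fun j _ => (hM i j).mul_const _]
  simp only [integral_mul_const]

theorem integrable_dotProduct_mulVec {d : ℕ} {Ω : Type*} [MeasurableSpace Ω] {P : Measure Ω}
    {M : Ω → Matrix (Fin d) (Fin d) ℝ} (hM : ∀ i j, Integrable (fun ω => M ω i j) P)
    (v : Fin d → ℝ) : Integrable (fun ω => v ⬝ᵥ (M ω *ᵥ v)) P := by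
  simp only [dotProduct, mulVec]
  exact integrable_finsetSum _ fun i _ =>
    (integrable_finsetSum _ fun j _ => (hM i j).mul_const _).const_mul _

theorem matExp_isHermitian {d : ℕ} {Ω : Type*} [MeasurableSpace Ω] {P : Measure Ω}
    {M : Ω → Matrix (Fin d) (Fin d) ℝ} (hM : ∀ ω, (M ω)ᵀ = M ω) : (matExp P M).IsHermitian := by
  ext i j
  simp only [matExp, conjTranspose_apply, of_apply, star_trivial]
  congr 1 with ω
  exact congrFun₂ (hM ω) i j

theorem integrable_vecMulVec_self_apply {d : ℕ} {Ω : Type*} [MeasurableSpace Ω] {P : Measure Ω}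
    [IsProbabilityMeasure P] {X : Ω → Fin d → ℝ} (hXm : Measurable X)
    (hX : ∀ᵐ ω ∂P, euclNorm (X ω) ≤ 1) (i j : Fin d) :
    Integrable (fun ω => vecMulVec (X ω) (X ω) i j) P := by
  have hle (u : Fin d → ℝ) (k : Fin d) : |u k| ≤ euclNorm u := by
    rw [euclNorm_eq_norm]
    exact PiLp.norm_apply_le (WithLp.toLp 2 u) k
  refine Integrable.of_bound (C := 1) ?_ ?_
  · simp only [vecMulVec_apply]
    exact Measurable.aestronglyMeasurable (by fun_prop)
  · filter_upwards [hX] with ω hω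
    rw [vecMulVec_apply, Real.norm_eq_abs, abs_mul]
    exact mul_le_one₀ ((hle _ i).trans hω) (abs_nonneg _) ((hle _ j).trans hω)

theorem integrable_tdMatrix_pow_apply {d : ℕ} {γ α : ℝ} (hγ : γ ∈ Set.Ico (0 : ℝ) 1)
    (hα : α ∈ Set.Ioc 0 ((1 - γ) / (1 + γ) ^ 2))
    {Ω : Type*} [MeasurableSpace Ω] {P : Measure Ω} [IsProbabilityMeasure P]
    {X Y : Ω → Fin d → ℝ} (hXm : Measurable X) (hYm : Measurable Y)
    (hX : ∀ᵐ ω ∂P, euclNorm (X ω) ≤ 1) (hY : ∀ᵐ ω ∂P, euclNorm (Y ω) ≤ 1)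
    (p : ℕ) (i j : Fin d) :
    Integrable (fun ω => (tdMatrix γ α (X ω) (Y ω) ^ p) i j) P := by
  refine Integrable.of_bound (C := 4 ^ p) ?_ ?_
  · have hc : Continuous fun q : (Fin d → ℝ) × (Fin d → ℝ) => (tdMatrix γ α q.1 q.2 ^ p) i j := by
      have : Continuous fun q : (Fin d → ℝ) × (Fin d → ℝ) => tdMatrix γ α q.1 q.2 := by
        unfold tdMatrix
        fun_prop
      exact (this.pow p).matrix_elem i j
    exact (hc.measurable.comp (hXm.prodMk hYm)).aestronglyMeasurable
  · filter_upwards [hX, hY] with ω hx hy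
    exact abs_apply_le_of_euclNorm_mulVec_le (euclNorm_pow_mulVec_le (by norm_num)
      (euclNorm_tdMatrix_mulVec_le_four_mul hγ hα hx hy) p) i j

theorem dotProduct_vecMulVec_self_mulVec {d : ℕ} (x v : Fin d → ℝ) :
    v ⬝ᵥ (vecMulVec x x *ᵥ v) = (x ⬝ᵥ v) ^ 2 := by
  rw [vecMulVec_mulVec, op_smul_eq_smul, dotProduct_smul, smul_eq_mul, dotProduct_comm v, sq]

/-- Let `A = X (X - γ Y)ᵀ` and `B = A + Aᵀ - α Aᵀ A`. For every step size
`α ∈ (0, (1-γ)/(1+γ)²]` and every integer `p ≥ 1`, `E[B^p] ≼ (13/12)·4^p·Σ` in the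
Loewner order, where `Σ = E[X Xᵀ]`. -/
theorem stmt4 {d : ℕ} (hd : 1 ≤ d) (γ : ℝ) (hγ : γ ∈ Set.Ico (0 : ℝ) 1)
    {Ω : Type*} [MeasurableSpace Ω] (P : Measure Ω) [IsProbabilityMeasure P]
    (X Y : Ω → Fin d → ℝ) (hXm : Measurable X) (hYm : Measurable Y)
    (hX1 : ∀ᵐ ω ∂P, euclNorm (X ω) ≤ 1) (hY1 : ∀ᵐ ω ∂P, euclNorm (Y ω) ≤ 1)
    (hXY : IdentDistrib X Y P P)
    (α : ℝ) (hα : α ∈ Set.Ioc 0 ((1 - γ) / (1 + γ) ^ 2))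
    (p : ℕ) (hp : 1 ≤ p) :
    (((13 / 12 : ℝ) * 4 ^ p) • matExp P (fun ω => vecMulVec (X ω) (X ω))
      - matExp P (fun ω =>
          (vecMulVec (X ω) (X ω - γ • Y ω) + (vecMulVec (X ω) (X ω - γ • Y ω))ᵀ
            - α • ((vecMulVec (X ω) (X ω - γ • Y ω))ᵀ * vecMulVec (X ω) (X ω - γ • Y ω))) ^ p)
      ).PosSemidef := by
  change (((13 / 12 : ℝ) * 4 ^ p) • matExp P (fun ω => vecMulVec (X ω) (X ω))
      - matExp P (fun ω => tdMatrix γ α (X ω) (Y ω) ^ p)).PosSemidef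
  have hS := integrable_vecMulVec_self_apply hXm hX1
  have hT := integrable_vecMulVec_self_apply hYm hY1
  have hB := integrable_tdMatrix_pow_apply hγ hα hXm hYm hX1 hY1 p
  refine PosSemidef.of_dotProduct_mulVec_nonneg ?_ fun v => ?_
  · refine IsHermitian.sub ?_ (matExp_isHermitian fun ω => ?_)
    · exact (matExp_isHermitian fun ω => by simp).smul (IsSelfAdjoint.all _)
    · rw [transpose_pow, tdMatrix_transpose]
  have hSv := integrable_dotProduct_mulVec hS v
  have hTv := integrable_dotProduct_mulVec hT v
  have hBv := integrable_dotProduct_mulVec hB v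
  rw [star_trivial, sub_mulVec, dotProduct_sub, smul_mulVec, dotProduct_smul, smul_eq_mul,
    dotProduct_matExp_mulVec hS, dotProduct_matExp_mulVec hB]
  simp only [dotProduct_vecMulVec_self_mulVec] at hSv hTv ⊢
  have hYX : ∫ ω, (Y ω ⬝ᵥ v) ^ 2 ∂P = ∫ ω, (X ω ⬝ᵥ v) ^ 2 ∂P :=
    (hXY.comp (u := fun x : Fin d → ℝ => (x ⬝ᵥ v) ^ 2)
      (Continuous.measurable (by fun_prop))).integral_eq.symm
  obtain ⟨m, rfl⟩ := Nat.exists_eq_add_of_le' hp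
  have hle : ∫ ω, v ⬝ᵥ (tdMatrix γ α (X ω) (Y ω) ^ (m + 1) *ᵥ v) ∂P
      ≤ ∫ ω, 4 ^ m * (3 * (X ω ⬝ᵥ v) ^ 2 + (Y ω ⬝ᵥ v) ^ 2) ∂P := by
    refine integral_mono_ae hBv (((hSv.const_mul 3).add hTv).const_mul _) ?_
    filter_upwards [hX1, hY1] with ω hx hy
    exact dotProduct_tdMatrix_pow_mulVec_le hγ hα hx hy m v
  rw [integral_const_mul, integral_add (hSv.const_mul 3) hTv, integral_const_mul, hYX] at hle
  have h0 : 0 ≤ ∫ ω, (X ω ⬝ᵥ v) ^ 2 ∂P := integral_nonneg fun ω => sq_nonneg _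
  have h4 : (0 : ℝ) ≤ 4 ^ m * ∫ ω, (X ω ⬝ᵥ v) ^ 2 ∂P := by positivity
  rw [pow_succ]
  linarith
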